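/- Let F = (f₁,…,f_n) : ℝ^n → ℝ^n be a polynomial mapping with every f_j nonconstant and f_j(0) = 0, and suppose every f_j is convenient. Then F is non-degenerate at infinity if and only if F is non-degenerate at infinity in the sense of Bivià-Ausina. -/

import Mathlib

open MvPolynomial Filter

/-- The linear form `l_p(ν) = ∑ i, p i * ν i`. -/
def lP {n : ℕ} (p : Fin n → ℤ) (ν : Fin n →₀ ℕ) : ℤ := ∑ i, p i * (ν i : ℤ)

/-- `d_p(f)`: the minimum of `l_p` over `{0} ∪ supp(f)`. -/
noncomputable def dP {n : ℕ} (p : Fin n → ℤ) (f : MvPolynomial (Fin n) ℝ) : ℤ :=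
  (insert (0 : Fin n →₀ ℕ) f.support).inf' (Finset.insert_nonempty _ _) (lP p)

/-- The face polynomial `f_p`: the sum of the monomials of `f` whose exponent `ν`
satisfies `l_p(ν) = d_p(f)` (zero if no `ν ∈ supp(f)` attains the minimum). -/
noncomputable def facePoly {n : ℕ} (p : Fin n → ℤ) (f : MvPolynomial (Fin n) ℝ) :
    MvPolynomial (Fin n) ℝ :=
  ∑ ν ∈ f.support.filter (fun ν => lP p ν = dP p f), monomial ν (coeff ν f)

/-- The gradient vector of a polynomial at a point (as a plain vector of `ℝⁿ`). -/
noncomputable def rgradV {n : ℕ} (f : MvPolynomial (Fin n) ℝ) (x : Fin n → ℝ) :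
    Fin n → ℝ :=
  fun i => eval x (pderiv i f)

/-- `I_p = {j : d_p(f_j) < 0}`. -/
noncomputable def Iset {n k : ℕ} (p : Fin n → ℤ) (f : Fin k → MvPolynomial (Fin n) ℝ) :
    Set (Fin k) :=
  { j | dP p (f j) < 0 }

/-- `J_p = {j : l_p(ν) > 0 for all ν ∈ supp(f_j)}`. -/
def Jset {n k : ℕ} (p : Fin n → ℤ) (f : Fin k → MvPolynomial (Fin n) ℝ) :
    Set (Fin k) :=
  { j | ∀ ν ∈ (f j).support, 0 < lP p ν }

/-- `F` is non-degenerate at infinity. -/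
noncomputable def NondegAtInfinity {n k : ℕ} (f : Fin k → MvPolynomial (Fin n) ℝ) :
    Prop :=
  ∀ p : Fin n → ℤ, (∃ i, p i < 0) → (Iset p f).Nonempty → Jset p f = ∅ →
    ∀ x : Fin n → ℝ, (∀ i, x i ≠ 0) →
      (∀ j ∈ Iset p f, eval x (facePoly p (f j)) = 0) →
      LinearIndependent ℝ (fun j : Iset p f => rgradV (facePoly p (f j)) x)

/-- `f` is convenient: its support meets every coordinate axis. -/
def Convenient {n : ℕ} (f : MvPolynomial (Fin n) ℝ) : Prop :=
  ∀ i : Fin n, ∃ m : ℕ, 1 ≤ m ∧ Finsupp.single i m ∈ f.support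

/-- `F` is non-degenerate at infinity in the sense of Bivià-Ausina. -/
noncomputable def BANondegAtInfinity {n k : ℕ} (f : Fin k → MvPolynomial (Fin n) ℝ) :
    Prop :=
  ∀ p : Fin n → ℤ, (∃ i, p i < 0) →
    ¬ ∃ x : Fin n → ℝ, (∀ i, x i ≠ 0) ∧ ∀ j, eval x (facePoly p (f j)) = 0

/-!
A face polynomial `f_p` is homogeneous of degree `d_p(f)` for the weights `p`, so Euler's identity
`⟨∇f_p(x), (p₁x₁, …, p_nx_n)⟩ = d_p(f) f_p(x)` makes its gradient at a zero `x` orthogonal to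
`(p₁x₁, …, p_nx_n)`, a nonzero vector when `x` lies in the torus and `p ≠ 0`. Hence at a common zero
of at least `n` face polynomials the gradients are linearly dependent. For convenient components and
`p` with a negative coordinate, every index lies in `I_p` and `J_p` is empty, so non-degeneracy can
only mean that no common zero exists.
-/

theorem eq_zero_of_linearIndependent_of_dotProduct_eq_zero {K ι m : Type*} [Field K] [Fintype m]
    {v : ι → m → K} (hv : LinearIndependent K v) (hcard : Nat.card m ≤ Nat.card ι)
    {u : m → K} (hu : ∀ j, v j ⬝ᵥ u = 0) : u = 0 := by
  have : Finite ι := hv.finite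
  have : Fintype ι := Fintype.ofFinite ι
  have hspan : Submodule.span K (Set.range v) = ⊤ := by
    refine hv.span_eq_top_of_card_eq_finrank' (le_antisymm hv.fintype_card_le_finrank ?_)
    simpa only [Module.finrank_fintype_fun_eq_card, Nat.card_eq_fintype_card] using hcard
  have hzero : dotProductBilin K K u = 0 :=
    LinearMap.ext_on_range hspan fun j ↦ (dotProduct_comm u (v j)).trans (hu j)
  exact dotProduct_eq_zero u fun w ↦ LinearMap.congr_fun hzero w

theorem sum_weight_smul_X_mul_pderiv {σ R A : Type*} [Fintype σ] [CommSemiring R] [Semiring A]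
    [Module A R] {w : σ → A} {d : A} {φ : MvPolynomial σ R} (hφ : φ.IsWeightedHomogeneous w d) :
    ∑ i, w i • (X i * pderiv i φ) = d • φ := by
  induction hφ using IsWeightedHomogeneous.induction_on with
  | zero => simp
  | add φ ψ _ _ hφ hψ => simp only [map_add, mul_add, smul_add, Finset.sum_add_distrib, hφ, hψ]
  | monomial ν r hν =>
    rw [← hν, Finsupp.weight_eq_sum, Finset.sum_smul]
    refine Finset.sum_congr rfl fun i _ ↦ ?_
    rw [X_mul_pderiv_monomial, smul_comm, smul_assoc]

theorem rgradV_dotProduct_weight_mul {n : ℕ} {p : Fin n → ℤ} {d : ℤ}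
    {φ : MvPolynomial (Fin n) ℝ} (hφ : φ.IsWeightedHomogeneous p d) (x : Fin n → ℝ) :
    rgradV φ x ⬝ᵥ (fun i ↦ p i * x i) = d * eval x φ := by
  have heuler := congrArg (eval x) (sum_weight_smul_X_mul_pderiv hφ)
  simp only [map_sum, zsmul_eq_mul, map_mul, map_intCast, eval_X] at heuler
  rw [← heuler]
  exact Finset.sum_congr rfl fun i _ ↦ by rw [rgradV]; ring

section FacePolynomial

variable {n : ℕ}

theorem lP_eq_weight (p : Fin n → ℤ) (ν : Fin n →₀ ℕ) : lP p ν = Finsupp.weight p ν := by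
  simp only [lP, Finsupp.weight_eq_sum, nsmul_eq_mul, mul_comm]

theorem facePoly_eq_weightedHomogeneousComponent (p : Fin n → ℤ) (g : MvPolynomial (Fin n) ℝ) :
    facePoly p g = weightedHomogeneousComponent p (dP p g) g := by
  simp only [facePoly, lP_eq_weight, weightedHomogeneousComponent_apply]

theorem isWeightedHomogeneous_facePoly (p : Fin n → ℤ) (g : MvPolynomial (Fin n) ℝ) :
    (facePoly p g).IsWeightedHomogeneous p (dP p g) := by
  rw [facePoly_eq_weightedHomogeneousComponent]
  exact weightedHomogeneousComponent_isWeightedHomogeneous _ _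

theorem not_linearIndependent_rgradV_facePoly {ι : Type*} {p : Fin n → ℤ} (hp : p ≠ 0)
    {g : ι → MvPolynomial (Fin n) ℝ} (hcard : n ≤ Nat.card ι) {x : Fin n → ℝ}
    (hx : ∀ i, x i ≠ 0) (hz : ∀ j, eval x (facePoly p (g j)) = 0) :
    ¬ LinearIndependent ℝ fun j ↦ rgradV (facePoly p (g j)) x := by
  intro hind
  have horth (j : ι) : rgradV (facePoly p (g j)) x ⬝ᵥ (fun i ↦ p i * x i) = 0 := by
    rw [rgradV_dotProduct_weight_mul (isWeightedHomogeneous_facePoly p (g j)), hz, mul_zero]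
  have hpx : (fun i ↦ p i * x i) = 0 :=
    eq_zero_of_linearIndependent_of_dotProduct_eq_zero hind ((Nat.card_fin n).trans_le hcard) horth
  refine hp (funext fun i ↦ ?_)
  exact Int.cast_eq_zero.mp ((mul_eq_zero_iff_right (hx i)).mp (congrFun hpx i))

end FacePolynomial

section Convenient

variable {n k : ℕ} {p : Fin n → ℤ}

theorem dP_neg_iff {g : MvPolynomial (Fin n) ℝ} : dP p g < 0 ↔ ∃ ν ∈ g.support, lP p ν < 0 := by
  simp [dP, Finset.inf'_lt_iff, lP]

theorem Convenient.dP_neg {g : MvPolynomial (Fin n) ℝ} (hg : Convenient g) (hp : ∃ i, p i < 0) :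
    dP p g < 0 := by
  obtain ⟨i, hi⟩ := hp
  obtain ⟨m, hm, hmem⟩ := hg i
  refine dP_neg_iff.mpr ⟨_, hmem, ?_⟩
  rw [lP_eq_weight, Finsupp.weight_single]
  exact smul_neg_of_pos_of_neg hm hi

theorem Iset_eq_univ_of_convenient {f : Fin k → MvPolynomial (Fin n) ℝ}
    (hconv : ∀ j, Convenient (f j)) (hp : ∃ i, p i < 0) : Iset p f = Set.univ :=
  Set.eq_univ_of_forall fun j ↦ (hconv j).dP_neg hp

theorem disjoint_Iset_Jset (p : Fin n → ℤ) (f : Fin k → MvPolynomial (Fin n) ℝ) :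
    Disjoint (Iset p f) (Jset p f) := by
  refine Set.disjoint_left.mpr fun j hI hJ ↦ ?_
  obtain ⟨ν, hν, hneg⟩ := dP_neg_iff.mp hI
  exact hneg.not_gt (hJ ν hν)

end Convenient

section Comparison

variable {n k : ℕ} {f : Fin k → MvPolynomial (Fin n) ℝ}

theorem NondegAtInfinity.baNondegAtInfinity (hf : NondegAtInfinity f) (hnk : n ≤ k)
    (hconv : ∀ j, Convenient (f j)) : BANondegAtInfinity f := by
  rintro p hp ⟨x, hx, hz⟩
  obtain ⟨i, hi⟩ := hp
  have hI : Iset p f = Set.univ := Iset_eq_univ_of_convenient hconv ⟨i, hi⟩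
  have hI_nonempty : (Iset p f).Nonempty := hI ▸ ⟨Fin.castLE hnk i, trivial⟩
  have hJ : Jset p f = ∅ := Set.univ_disjoint.mp (hI ▸ disjoint_Iset_Jset p f)
  have hcard : n ≤ Nat.card (Iset p f) := by simpa [hI] using hnk
  have hp_ne : p ≠ 0 := fun h ↦ hi.ne (congrFun h i)
  exact not_linearIndependent_rgradV_facePoly hp_ne hcard hx (fun j ↦ hz j)
    (hf p ⟨i, hi⟩ hI_nonempty hJ x hx fun j _ ↦ hz j)

theorem BANondegAtInfinity.nondegAtInfinity (hf : BANondegAtInfinity f)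
    (hconv : ∀ j, Convenient (f j)) : NondegAtInfinity f := by
  intro p hp _ _ x hx hz
  exact absurd ⟨x, hx, fun j ↦ hz j ((hconv j).dP_neg hp)⟩ (hf p hp)

theorem nondeg_iff_BAnondeg_general (hnk : n ≤ k) (hconv : ∀ j, Convenient (f j)) :
    NondegAtInfinity f ↔ BANondegAtInfinity f :=
  ⟨fun hf ↦ hf.baNondegAtInfinity hnk hconv, fun hf ↦ hf.nondegAtInfinity hconv⟩

end Comparison

/-- For `F : ℝⁿ → ℝⁿ` with all components nonconstant, vanishing at
`0` and convenient, non-degeneracy at infinity is equivalent to Bivià-Ausina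
non-degeneracy at infinity. -/
theorem nondeg_iff_BAnondeg {n : ℕ}
    (f : Fin n → MvPolynomial (Fin n) ℝ)
    (hnc : ∀ j, (f j).totalDegree ≠ 0)
    (h0 : ∀ j, eval (0 : Fin n → ℝ) (f j) = 0)
    (hconv : ∀ j, Convenient (f j)) :
    NondegAtInfinity f ↔ BANondegAtInfinity f :=
  nondeg_iff_BAnondeg_general le_rfl hconv
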